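/- Let u and v be two functions C² on an annular region between a C¹ surface ∂Ω_R (a large sphere of radius R) and small spheres around points s and m, both satisfying the radiating Helmholtz-type equation with coefficient field A_B (equal to a constant positive definite A outside a compact set) except for point sources at s and m respectively. Then the boundary bilinear concomitant ∫_{∂Ω_R} [ (n·A·∇u)·v − (n·A·∇v)·u ] dS tends to 0 as R → ∞ whenever u, v both satisfy the anisotropic radiation condition (r̂·A⁻¹·r̂)^{1/2}·r̂·A⁻¹·∇w(r) − iκ·w(r) = O(|r|⁻²) together with w(r) = O(|r|⁻¹). -/

import Mathlib

open scoped InnerProductSpace Topology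
open Matrix Filter MeasureTheory

noncomputable section

/-- The action of a `3×3` real matrix on a vector of `EuclideanSpace ℝ (Fin 3)`. -/
def matVec (A : Matrix (Fin 3) (Fin 3) ℝ) (x : EuclideanSpace ℝ (Fin 3)) :
    EuclideanSpace ℝ (Fin 3) :=
  (WithLp.equiv 2 (Fin 3 → ℝ)).symm (A *ᵥ (WithLp.equiv 2 (Fin 3 → ℝ) x))

/-- The anisotropic radiation-condition defect
`(r̂·A⁻¹·r̂)^{1/2}·r̂·A⁻¹·∇w(x) − iκ·w(x)` of a field `w` at a point `x` (with `r̂ = x/|x|`). -/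
def radiationDefect (A : Matrix (Fin 3) (Fin 3) ℝ) (κ : ℝ) (w : EuclideanSpace ℝ (Fin 3) → ℂ)
    (x : EuclideanSpace ℝ (Fin 3)) : ℂ :=
  ((Real.sqrt (⟪‖x‖⁻¹ • x, matVec A⁻¹ (‖x‖⁻¹ • x)⟫_ℝ) : ℝ) : ℂ) *
      fderiv ℝ w x (matVec A⁻¹ (‖x‖⁻¹ • x))
    - Complex.I * κ * w x

/-- A field `w` satisfies the radiating anisotropic Helmholtz equation
`−div(A·∇w) − κ²w = 0`, i.e. `∑ᵢⱼ Aᵢⱼ ∂ᵢ∂ⱼw + κ²w = 0`, at the point `x`. -/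
def SatisfiesHelmholtzAt (A : Matrix (Fin 3) (Fin 3) ℝ) (κ : ℝ)
    (w : EuclideanSpace ℝ (Fin 3) → ℂ) (x : EuclideanSpace ℝ (Fin 3)) : Prop :=
  (∑ i : Fin 3, ∑ j : Fin 3, (A i j : ℂ) *
      fderiv ℝ (fun y => fderiv ℝ w y (EuclideanSpace.single j 1)) x (EuclideanSpace.single i 1))
    + (κ : ℂ) ^ 2 * w x = 0

/-!
The concomitant `J = v A∇u - u A∇v` is divergence free where `u` and `v` solve the equation, so
its flux through a surface enclosing the ball of radius `r₀` does not depend on the surface. The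
ellipsoids `|A⁻¹x| = R` have normal proportional to `A⁻²x`, and `A⁻²x · J = v (A⁻¹x · ∇u) -
u (A⁻¹x · ∇v)` differentiates exactly in the direction of the radiation condition: the `iκuv` terms
cancel, and the flux through the ellipsoids tends to zero. Hence the flux through every sphere of
radius `R > r₀` vanishes, not only in the limit. All fluxes are taken in the weak form
`∫ J · ∇φ`, with dilated cutoffs `φ` constant on the ellipsoids and with radial potentials `φ`.
-/

section Exterior

variable {E : Type*} [SeminormedAddCommGroup E] (r : ℝ)

lemma isOpen_setOf_lt_norm : IsOpen {x : E | r < ‖x‖} :=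
  isOpen_lt continuous_const continuous_norm

lemma compl_setOf_lt_norm : {x : E | r < ‖x‖}ᶜ = Metric.closedBall 0 r := by
  ext x
  simp

end Exterior

section Gradient

open scoped Gradient

variable {E : Type*} [NormedAddCommGroup E] [InnerProductSpace ℝ E] [CompleteSpace E]

lemma continuous_gradient {φ : E → ℝ} (hφ : ContDiff ℝ 1 φ) : Continuous (∇ φ) :=
  (InnerProductSpace.toDual ℝ E).symm.continuous.comp (hφ.continuous_fderiv one_ne_zero)

lemma tsupport_gradient_subset (φ : E → ℝ) : tsupport (∇ φ) ⊆ tsupport φ := by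
  refine (closure_mono fun x hx => ?_).trans (tsupport_fderiv_subset ℝ (f := φ))
  contrapose! hx
  simp_all [gradient]

lemma tsupport_gradient_subset_of_eventuallyEq_const {U : Set E} {φ : E → ℝ} {c : ℝ}
    (hφ : φ =ᶠ[𝓝ˢ Uᶜ] fun _ => c) : tsupport (∇ φ) ⊆ U := by
  intro x hx
  by_contra hxU
  have h_const : φ =ᶠ[𝓝 x] fun _ => c := hφ.filter_mono (nhds_le_nhdsSet hxU)
  refine notMem_tsupport_iff_eventuallyEq.2 ?_ hx
  filter_upwards [h_const.gradient] with y hy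
  simpa [gradient] using hy

variable {F : Type*} [NormedAddCommGroup F] [NormedSpace ℝ F]

lemma tsupport_apply_gradient_subset (J : E → E →L[ℝ] F) (φ : E → ℝ) :
    tsupport (fun x => J x (∇ φ x)) ⊆ tsupport (∇ φ) :=
  closure_mono fun x hx h => hx (by simp [h])

lemma integrable_apply_gradient [MeasurableSpace E] [BorelSpace E] {μ : Measure E}
    [IsFiniteMeasureOnCompacts μ] {U : Set E} (hU : IsOpen U) {J : E → E →L[ℝ] F}
    (hJ : ContinuousOn J U) {φ : E → ℝ} (hφ : ContDiff ℝ 1 φ) (hφc : HasCompactSupport φ) {c : ℝ}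
    (hφU : φ =ᶠ[𝓝ˢ Uᶜ] fun _ => c) : Integrable (fun x => J x (∇ φ x)) μ := by
  have h_subset := tsupport_apply_gradient_subset J φ
  have h_cont : Continuous fun x => J x (∇ φ x) :=
    (hJ.clm_apply (continuous_gradient hφ).continuousOn).continuous_of_tsupport_subset hU
      (h_subset.trans (tsupport_gradient_subset_of_eventuallyEq_const hφU))
  exact h_cont.integrable_of_hasCompactSupport
    (hφc.of_isClosed_subset (isClosed_tsupport _) (h_subset.trans (tsupport_gradient_subset φ)))

end Gradient

section Divergence

open scoped Gradient

variable {E F : Type*} [NormedAddCommGroup E] [NormedSpace ℝ E]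
  [NormedAddCommGroup F] [NormedSpace ℝ F]

lemma contDiff_smul_of_tsupport_subset {n : WithTop ℕ∞} {U : Set E} (hU : IsOpen U)
    {φ : E → ℝ} {f : E → F} (hφ : ContDiff ℝ n φ) (hf : ContDiffOn ℝ n f U)
    (hφU : tsupport φ ⊆ U) : ContDiff ℝ n (φ • f) := by
  refine contDiff_iff_contDiffAt.2 fun x => ?_
  by_cases hx : x ∈ tsupport φ
  · exact hφ.contDiffAt.smul (hf.contDiffAt (hU.mem_nhds (hφU hx)))
  · have h_zero : φ • f =ᶠ[𝓝 x] 0 := by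
      filter_upwards [notMem_tsupport_iff_eventuallyEq.1 hx] with y hy
      simp [hy]
    exact contDiffAt_const.congr_of_eventuallyEq h_zero

lemma integral_fderiv_apply_eq_zero [FiniteDimensional ℝ E] [MeasurableSpace E] [BorelSpace E]
    {μ : Measure E} [μ.IsAddHaarMeasure] {f : E → F} (hf : ContDiff ℝ 1 f)
    (hfc : HasCompactSupport f) (v : E) : ∫ x, fderiv ℝ f x v ∂μ = 0 := by
  have hf' : Integrable (fun x => fderiv ℝ f x v) μ :=
    ((hf.continuous_fderiv one_ne_zero).clm_apply continuous_const).integrable_of_hasCompactSupport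
      (hfc.fderiv_apply ℝ v)
  simpa using integral_smul_fderiv_eq_neg_fderiv_smul_of_integrable (μ := μ) (v := v)
    (f := fun _ => (1 : ℝ)) (by simp) (by simpa using hf')
    (by simpa using hf.continuous.integrable_of_hasCompactSupport hfc)
    (fun _ _ => by fun_prop) (fun _ _ => hf.differentiable one_ne_zero _)

variable {ι : Type*} [Fintype ι] [DecidableEq ι]

/-- The divergence `∑ᵢ ∂ᵢ Jᵢ` of a covector field `J` on Euclidean space with values in `F`. The
component `Jᵢ(x)` is `J x eᵢ`, so that a complex-valued field is stored with `F = ℂ`. -/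
def divergence (J : EuclideanSpace ℝ ι → EuclideanSpace ℝ ι →L[ℝ] F)
    (x : EuclideanSpace ℝ ι) : F :=
  ∑ i, fderiv ℝ J x (EuclideanSpace.single i 1) (EuclideanSpace.single i 1)

lemma divergence_sub {J J' : EuclideanSpace ℝ ι → EuclideanSpace ℝ ι →L[ℝ] F}
    {x : EuclideanSpace ℝ ι} (hJ : DifferentiableAt ℝ J x) (hJ' : DifferentiableAt ℝ J' x) :
    divergence (J - J') x = divergence J x - divergence J' x := by
  simp [divergence, fderiv_sub hJ hJ', Finset.sum_sub_distrib]

lemma divergence_smul {𝕜 : Type*} [NormedField 𝕜] [NormedAlgebra ℝ 𝕜] [NormedSpace 𝕜 F]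
    [IsScalarTower ℝ 𝕜 F] {f : EuclideanSpace ℝ ι → 𝕜}
    {J : EuclideanSpace ℝ ι → EuclideanSpace ℝ ι →L[ℝ] F} {x : EuclideanSpace ℝ ι}
    (hf : DifferentiableAt ℝ f x) (hJ : DifferentiableAt ℝ J x) :
    divergence (f • J) x = f x • divergence J x +
      ∑ i, fderiv ℝ f x (EuclideanSpace.single i 1) • J x (EuclideanSpace.single i 1) := by
  simp [divergence, fderiv_smul hf hJ, Finset.sum_add_distrib, Finset.smul_sum]

lemma divergence_eq_zero_of_notMem_tsupport
    {J : EuclideanSpace ℝ ι → EuclideanSpace ℝ ι →L[ℝ] F} {x : EuclideanSpace ℝ ι}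
    (hx : x ∉ tsupport J) : divergence J x = 0 := by
  simp [divergence, fderiv_of_notMem_tsupport ℝ hx]

lemma integral_divergence_eq_zero {J : EuclideanSpace ℝ ι → EuclideanSpace ℝ ι →L[ℝ] F}
    (hJ : ContDiff ℝ 1 J) (hJc : HasCompactSupport J) : ∫ x, divergence J x = 0 := by
  have h_apply (i : ι) (x : EuclideanSpace ℝ ι) :
      fderiv ℝ J x (EuclideanSpace.single i 1) (EuclideanSpace.single i 1) =
        fderiv ℝ (fun y => J y (EuclideanSpace.single i 1)) x (EuclideanSpace.single i 1) := by
    rw [fderiv_clm_apply (hJ.differentiable one_ne_zero x) (differentiableAt_const _)]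
    simp
  have h_smooth (i : ι) : ContDiff ℝ 1 fun y => J y (EuclideanSpace.single i 1) :=
    hJ.clm_apply contDiff_const
  have h_supp (i : ι) : HasCompactSupport fun y => J y (EuclideanSpace.single i 1) :=
    hJc.comp_left (g := fun L : EuclideanSpace ℝ ι →L[ℝ] F => L (EuclideanSpace.single i 1)) rfl
  simp only [divergence, h_apply]
  rw [integral_finsetSum]
  · exact Finset.sum_eq_zero fun i _ => integral_fderiv_apply_eq_zero (h_smooth i) (h_supp i) _
  · exact fun i _ => (((h_smooth i).continuous_fderiv one_ne_zero).clm_apply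
      continuous_const).integrable_of_hasCompactSupport ((h_supp i).fderiv_apply ℝ _)

lemma sum_fderiv_single_smul_eq_apply_gradient (φ : EuclideanSpace ℝ ι → ℝ)
    (x : EuclideanSpace ℝ ι) (L : EuclideanSpace ℝ ι →L[ℝ] F) :
    ∑ i, fderiv ℝ φ x (EuclideanSpace.single i 1) • L (EuclideanSpace.single i 1) =
      L (∇ φ x) := by
  conv_rhs => rw [← (EuclideanSpace.basisFun ι ℝ).sum_repr (∇ φ x)]
  simp only [map_sum, map_smul, EuclideanSpace.basisFun_repr, EuclideanSpace.basisFun_apply]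
  refine Finset.sum_congr rfl fun i _ => ?_
  rw [← inner_gradient_left, EuclideanSpace.inner_single_right]
  simp

lemma integral_apply_gradient_eq_zero {U : Set (EuclideanSpace ℝ ι)} (hU : IsOpen U)
    {J : EuclideanSpace ℝ ι → EuclideanSpace ℝ ι →L[ℝ] F} (hJ : ContDiffOn ℝ 1 J U)
    (hdiv : ∀ x ∈ U, divergence J x = 0) {φ : EuclideanSpace ℝ ι → ℝ} (hφ : ContDiff ℝ 1 φ)
    (hφc : HasCompactSupport φ) (hφU : tsupport φ ⊆ U) : ∫ x, J x (∇ φ x) = 0 := by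
  have h_div (x : EuclideanSpace ℝ ι) : divergence (φ • J) x = J x (∇ φ x) := by
    by_cases hx : x ∈ tsupport φ
    · rw [divergence_smul (hφ.differentiable one_ne_zero x)
          ((hJ.contDiffAt (hU.mem_nhds (hφU hx))).differentiableAt one_ne_zero),
        hdiv x (hφU hx), smul_zero, zero_add, sum_fderiv_single_smul_eq_apply_gradient]
    · have hx' : x ∉ tsupport (φ • J) := fun h => hx (tsupport_smul_subset_left φ J h)
      rw [divergence_eq_zero_of_notMem_tsupport hx',
        ← sum_fderiv_single_smul_eq_apply_gradient]
      simp [fderiv_of_notMem_tsupport ℝ hx]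
  simp only [← h_div]
  exact integral_divergence_eq_zero (contDiff_smul_of_tsupport_subset hU hφ hJ hφU)
    hφc.smul_right

lemma integral_apply_gradient_eq_of_eventuallyEq_const {U : Set (EuclideanSpace ℝ ι)}
    (hU : IsOpen U) {J : EuclideanSpace ℝ ι → EuclideanSpace ℝ ι →L[ℝ] F}
    (hJ : ContDiffOn ℝ 1 J U) (hdiv : ∀ x ∈ U, divergence J x = 0)
    {φ ψ : EuclideanSpace ℝ ι → ℝ} (hφ : ContDiff ℝ 1 φ) (hφc : HasCompactSupport φ)
    (hψ : ContDiff ℝ 1 ψ) (hψc : HasCompactSupport ψ) {c : ℝ} (hφU : φ =ᶠ[𝓝ˢ Uᶜ] fun _ => c)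
    (hψU : ψ =ᶠ[𝓝ˢ Uᶜ] fun _ => c) : ∫ x, J x (∇ φ x) = ∫ x, J x (∇ ψ x) := by
  have h_supp : tsupport (φ - ψ) ⊆ U := by
    intro x hx
    by_contra hxU
    refine notMem_tsupport_iff_eventuallyEq.2 ?_ hx
    filter_upwards [hφU.filter_mono (nhds_le_nhdsSet hxU),
      hψU.filter_mono (nhds_le_nhdsSet hxU)] with y hφy hψy
    simp [hφy, hψy]
  have h_grad (x : EuclideanSpace ℝ ι) : ∇ (φ - ψ) x = ∇ φ x - ∇ ψ x := by
    simp [gradient, fderiv_sub (hφ.differentiable one_ne_zero x) (hψ.differentiable one_ne_zero x)]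
  rw [← sub_eq_zero, ← integral_sub (integrable_apply_gradient hU hJ.continuousOn hφ hφc hφU)
    (integrable_apply_gradient hU hJ.continuousOn hψ hψc hψU)]
  simp only [← map_sub, ← h_grad]
  exact integral_apply_gradient_eq_zero hU hJ hdiv (hφ.sub hψ) (hφc.sub hψc) h_supp

end Divergence

section Dilation

open scoped Gradient

variable {E : Type*} [NormedAddCommGroup E]

lemma eventually_comp_inv_smul_eventuallyEq_const [NormedSpace ℝ E] {α : Type*} {f : E → α} {c : α}
    (hf : f =ᶠ[𝓝 0] fun _ => c) (r : ℝ) :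
    ∀ᶠ R : ℝ in atTop,
      (fun x => f (R⁻¹ • x)) =ᶠ[𝓝ˢ (Metric.closedBall 0 r)] fun _ => c := by
  obtain ⟨δ, hδ, hfδ⟩ := Metric.eventually_nhds_iff.1 hf
  filter_upwards [eventually_gt_atTop 0, eventually_gt_atTop (r / δ)] with R hR hrR
  have h_subset : Metric.closedBall (0 : E) r ⊆ Metric.ball 0 (R * δ) :=
    Metric.closedBall_subset_ball ((div_lt_iff₀ hδ).1 hrR)
  filter_upwards [Metric.isOpen_ball.mem_nhdsSet.2 h_subset] with x hx
  refine hfδ ?_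
  rw [mem_ball_zero_iff] at hx
  rwa [dist_zero_right, norm_smul, norm_inv, Real.norm_of_nonneg hR.le, inv_mul_lt_iff₀ hR]

variable [InnerProductSpace ℝ E] {F : Type*} [NormedAddCommGroup F] [NormedSpace ℝ F]

lemma gradient_comp_smul [CompleteSpace E] (φ : E → ℝ) (c : ℝ) (x : E) :
    ∇ (fun y => φ (c • y)) x = c • ∇ φ (c • x) := by
  simp [gradient, fderiv_comp_smul]

variable [FiniteDimensional ℝ E] [MeasurableSpace E] [BorelSpace E]
  {μ : Measure E} [μ.IsAddHaarMeasure] {J : E → E →L[ℝ] F} {φ h : E → ℝ} {S : E →L[ℝ] E}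

lemma integrable_mul_of_tsupport_subset {X : Type*} [TopologicalSpace X] [MeasurableSpace X]
    [OpensMeasurableSpace X] {ν : Measure X} [IsFiniteMeasureOnCompacts ν] {U : Set X}
    (hU : IsOpen U) {f g : X → ℝ} (hf : Continuous f) (hfc : HasCompactSupport f)
    (hfU : tsupport f ⊆ U) (hg : ContinuousOn g U) : Integrable (fun x => f x * g x) ν :=
  ((hf.continuousOn.mul hg).continuous_of_tsupport_subset hU
    (tsupport_mul_subset_left.trans hfU)).integrable_of_hasCompactSupport hfc.mul_right

lemma integral_apply_gradient_comp_inv_smul (hφ : ∀ x, ∇ φ x = h x • S x) {R : ℝ} (hR : 0 < R) :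
    ∫ x, J x (∇ (fun y => φ (R⁻¹ • y)) x) ∂μ =
      ∫ y, (R ^ Module.finrank ℝ E / R ^ 2 * h y) • J (R • y) (S (R • y)) ∂μ := by
  have h_subst := Measure.integral_comp_smul μ
    (fun x => J x (∇ (fun y => φ (R⁻¹ • y)) x)) R
  rw [abs_of_pos (by positivity), eq_inv_smul_iff₀ (by positivity), ← integral_smul] at h_subst
  rw [← h_subst]
  congr 1 with y
  simp only [gradient_comp_smul, inv_smul_smul₀ hR.ne', hφ, map_smul, smul_smul]
  congr 1
  field_simp

lemma tendsto_integral_apply_gradient_comp_inv_smul (hφ : ∀ x, ∇ φ x = h x • S x)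
    (hh : Continuous h) (hhc : HasCompactSupport h) (hh0 : 0 ∉ tsupport h)
    (hJ : (fun x => J x (S x)) =o[Bornology.cobounded E]
      fun x => ‖x‖ ^ 2 / ‖x‖ ^ Module.finrank ℝ E) :
    Tendsto (fun R : ℝ => ∫ x, J x (∇ (fun y => φ (R⁻¹ • y)) x) ∂μ) atTop (𝓝 0) := by
  set n := Module.finrank ℝ E
  have h_integrable : Integrable (fun y => h y * (‖y‖ ^ 2 / ‖y‖ ^ n)) μ :=
    integrable_mul_of_tsupport_subset isOpen_compl_singleton hh hhc
      (fun y hy => ne_of_mem_of_not_mem hy hh0) (ContinuousOn.div (by fun_prop) (by fun_prop)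
        fun y hy => pow_ne_zero _ (norm_ne_zero_iff.2 hy))
  obtain ⟨δ, hδ, hhδ⟩ := Metric.eventually_nhds_iff.1 (notMem_tsupport_iff_eventuallyEq.1 hh0)
  refine (Asymptotics.isLittleO_one_iff ℝ).1 (Asymptotics.IsLittleO.trans_isBigO
    (g := fun _ => ∫ y, ‖h y * (‖y‖ ^ 2 / ‖y‖ ^ n)‖ ∂μ) (Asymptotics.isLittleO_iff.2 fun ε hε => ?_)
    (Asymptotics.isBigO_const_one ℝ _ _))
  obtain ⟨M, -, hM⟩ := (Filter.hasBasis_cobounded_norm (E := E)).eventually_iff.1 (hJ.def hε)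
  filter_upwards [eventually_gt_atTop 0, eventually_ge_atTop (M / δ)] with R hR hMR
  rw [integral_apply_gradient_comp_inv_smul hφ hR,
    Real.norm_of_nonneg (integral_nonneg fun _ => norm_nonneg _), ← integral_const_mul]
  refine norm_integral_le_of_norm_le (h_integrable.norm.const_mul ε)
    (Eventually.of_forall fun y => ?_)
  rcases lt_or_ge ‖y‖ δ with hy | hy
  · simp [hhδ (by simpa using hy)]
  have hy0 : 0 < ‖y‖ := hδ.trans_le hy
  have h_norm : ‖R • y‖ = R * ‖y‖ := by rw [norm_smul, Real.norm_of_nonneg hR.le]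
  have h_far : M ≤ ‖R • y‖ := by
    rw [h_norm]
    exact ((div_le_iff₀ hδ).1 hMR).trans (by gcongr)
  calc ‖(R ^ n / R ^ 2 * h y) • J (R • y) (S (R • y))‖
      ≤ R ^ n / R ^ 2 * ‖h y‖ * (ε * (‖R • y‖ ^ 2 / ‖R • y‖ ^ n)) := by
        rw [norm_smul, norm_mul, Real.norm_of_nonneg (by positivity)]
        gcongr
        simpa using hM h_far
    _ = ε * ‖h y * (‖y‖ ^ 2 / ‖y‖ ^ n)‖ := by
        rw [h_norm, norm_mul, Real.norm_of_nonneg (by positivity : 0 ≤ ‖y‖ ^ 2 / ‖y‖ ^ n), mul_pow,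
          mul_pow]
        field_simp

end Dilation

section EllipsoidCutoff

open scoped Gradient

variable {E : Type*} [NormedAddCommGroup E] [InnerProductSpace ℝ E] {T : E →L[ℝ] E}

/-- A smooth cutoff function which is constant on every ellipsoid `‖T x‖ = const`: it equals `1`
for `‖T x‖ ≤ 1` and `0` for `‖T x‖ ^ 2 ≥ 2`. -/
def ellipsoidCutoff (T : E →L[ℝ] E) (x : E) : ℝ :=
  Real.smoothTransition (2 - ‖T x‖ ^ 2)

lemma contDiff_ellipsoidCutoff (T : E →L[ℝ] E) {n : ℕ∞} : ContDiff ℝ n (ellipsoidCutoff T) :=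
  Real.smoothTransition.contDiff.comp (contDiff_const.sub (T.contDiff.norm_sq ℝ))

lemma ellipsoidCutoff_eventuallyEq_one (T : E →L[ℝ] E) :
    ellipsoidCutoff T =ᶠ[𝓝 0] fun _ => 1 := by
  have h_cont : ContinuousAt (fun x => ‖T x‖ ^ 2) 0 := by fun_prop
  filter_upwards [h_cont.eventually_lt_const (by simp : ‖T 0‖ ^ 2 < 1)] with x hx
  exact Real.smoothTransition.one_of_one_le (by linarith)

lemma hasCompactSupport_comp_sub_norm_sq [FiniteDimensional ℝ E] (hT : Function.Injective T)
    {f : ℝ → ℝ} (hf : ∀ t < 0, f t = 0) (a : ℝ) :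
    HasCompactSupport fun x => f (a - ‖T x‖ ^ 2) := by
  have h_support : HasCompactSupport fun y : E => f (a - ‖y‖ ^ 2) := by
    refine .of_support_subset_isCompact (isCompact_closedBall 0 √a) fun y hy => ?_
    rw [mem_closedBall_zero_iff]
    refine Real.le_sqrt_of_sq_le ?_
    by_contra! h
    exact hy (hf _ (by linarith))
  exact h_support.comp_isClosedEmbedding ((T : E →ₗ[ℝ] E).isClosedEmbedding_of_injective
    (LinearMap.ker_eq_bot.2 hT))

lemma hasCompactSupport_ellipsoidCutoff [FiniteDimensional ℝ E] (hT : Function.Injective T) :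
    HasCompactSupport (ellipsoidCutoff T) :=
  hasCompactSupport_comp_sub_norm_sq hT
    (fun _ ht => Real.smoothTransition.zero_of_nonpos ht.le) 2

lemma gradient_ellipsoidCutoff [CompleteSpace E] (T : E →L[ℝ] E) (x : E) :
    ∇ (ellipsoidCutoff T) x =
      (-2 * deriv Real.smoothTransition (2 - ‖T x‖ ^ 2)) • (T.adjoint ∘L T) x := by
  have h_trans : HasDerivAt Real.smoothTransition _ (2 - ‖T x‖ ^ 2) :=
    (Real.smoothTransition.contDiff.differentiable (n := 1) one_ne_zero _).hasDerivAt
  have h_deriv := h_trans.comp_hasFDerivAt x ((T.hasFDerivAt.norm_sq (x := x)).const_sub 2)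
  refine HasGradientAt.gradient (hasGradientAt_iff_hasFDerivAt.2 (h_deriv.congr_fderiv ?_))
  ext y
  simp only [smul_neg, _root_.neg_apply, _root_.smul_apply, ContinuousLinearMap.comp_apply,
    coe_innerSL_apply, nsmul_eq_mul, Nat.cast_ofNat, smul_eq_mul, neg_mul, neg_smul, map_neg,
    map_smul, InnerProductSpace.toDual_apply_apply, ContinuousLinearMap.adjoint_inner_left, neg_inj]
  ring

lemma deriv_smoothTransition_eq_zero {t : ℝ} (ht : t ∉ Set.Icc 0 1) :
    deriv Real.smoothTransition t = 0 := by
  rw [Set.mem_Icc, not_and_or, not_le, not_le] at ht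
  rcases ht with ht | ht
  · have h_const : Real.smoothTransition =ᶠ[𝓝 t] fun _ => 0 := by
      filter_upwards [Iio_mem_nhds ht] with y hy
      exact Real.smoothTransition.zero_of_nonpos (le_of_lt hy)
    simp [h_const.deriv_eq]
  · have h_const : Real.smoothTransition =ᶠ[𝓝 t] fun _ => 1 := by
      filter_upwards [Ioi_mem_nhds ht] with y hy
      exact Real.smoothTransition.one_of_one_le (le_of_lt hy)
    simp [h_const.deriv_eq]

lemma tendsto_integral_apply_gradient_ellipsoidCutoff [FiniteDimensional ℝ E]
    [MeasurableSpace E] [BorelSpace E] {μ : Measure E} [μ.IsAddHaarMeasure]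
    {F : Type*} [NormedAddCommGroup F] [NormedSpace ℝ F] {J : E → E →L[ℝ] F}
    (hT : Function.Injective T)
    (hJ : (fun x => J x ((T.adjoint ∘L T) x)) =o[Bornology.cobounded E]
      fun x => ‖x‖ ^ 2 / ‖x‖ ^ Module.finrank ℝ E) :
    Tendsto (fun R : ℝ => ∫ x, J x (∇ (fun y => ellipsoidCutoff T (R⁻¹ • y)) x) ∂μ)
      atTop (𝓝 0) := by
  have h_cont : Continuous fun x => -2 * deriv Real.smoothTransition (2 - ‖T x‖ ^ 2) :=
    continuous_const.mul (((Real.smoothTransition.contDiff (n := 1)).continuous_deriv le_rfl).comp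
      (by fun_prop))
  refine tendsto_integral_apply_gradient_comp_inv_smul (gradient_ellipsoidCutoff T) h_cont
    (hasCompactSupport_comp_sub_norm_sq hT (f := fun t => -2 * deriv Real.smoothTransition t)
      (fun t ht => by simp [deriv_smoothTransition_eq_zero fun h => ht.not_ge h.1]) 2)
    (notMem_tsupport_iff_eventuallyEq.2 ?_) hJ
  have h_near : ContinuousAt (fun x => 2 - ‖T x‖ ^ 2) 0 := by fun_prop
  filter_upwards [h_near.eventually_const_lt (u := 1) (by simp)] with x hx
  simp [deriv_smoothTransition_eq_zero fun h => hx.not_ge h.2]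

end EllipsoidCutoff

section FluxAtInfinity

open scoped Gradient

variable {ι : Type*} [Fintype ι] [DecidableEq ι] {F : Type*} [NormedAddCommGroup F]
  [NormedSpace ℝ F]

-- `T†T x` is normal to the ellipsoid `‖T x‖ = const` through `x` and has length of order `‖x‖`,
-- while that ellipsoid has area of order `‖x‖ ^ (n - 1)`: at the assumed rate the flux of `J`
-- through it tends to zero.
lemma integral_apply_gradient_eq_zero_of_isLittleO {r₀ : ℝ}
    {J : EuclideanSpace ℝ ι → EuclideanSpace ℝ ι →L[ℝ] F}
    (hJ : ContDiffOn ℝ 1 J {x | r₀ < ‖x‖}) (hdiv : ∀ x, r₀ < ‖x‖ → divergence J x = 0)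
    {T : EuclideanSpace ℝ ι →L[ℝ] EuclideanSpace ℝ ι} (hT : Function.Injective T)
    (hJT : (fun x => J x ((T.adjoint ∘L T) x)) =o[Bornology.cobounded (EuclideanSpace ℝ ι)]
      fun x => ‖x‖ ^ 2 / ‖x‖ ^ Fintype.card ι)
    {φ : EuclideanSpace ℝ ι → ℝ} (hφ : ContDiff ℝ 1 φ) (hφc : HasCompactSupport φ) {c : ℝ}
    (hφ0 : φ =ᶠ[𝓝ˢ (Metric.closedBall 0 r₀)] fun _ => c) : ∫ x, J x (∇ φ x) = 0 := by
  have h_compl := compl_setOf_lt_norm (E := EuclideanSpace ℝ ι) r₀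
  have h_eq : ∀ᶠ R : ℝ in atTop, ∫ x, J x (∇ φ x) =
      c • ∫ x, J x (∇ (fun y => ellipsoidCutoff T (R⁻¹ • y)) x) := by
    filter_upwards [eventually_gt_atTop 0, eventually_comp_inv_smul_eventuallyEq_const
      (ellipsoidCutoff_eventuallyEq_one T) r₀] with R hR h_one
    have h_smooth : ContDiff ℝ 1 fun y => ellipsoidCutoff T (R⁻¹ • y) :=
      (contDiff_ellipsoidCutoff T).comp (contDiff_const_smul R⁻¹)
    have h_supp : HasCompactSupport fun y => ellipsoidCutoff T (R⁻¹ • y) :=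
      (hasCompactSupport_ellipsoidCutoff hT).comp_smul (inv_ne_zero hR.ne')
    rw [← integral_smul, integral_apply_gradient_eq_of_eventuallyEq_const
      (isOpen_setOf_lt_norm r₀) hJ hdiv hφ hφc
      (ψ := fun y => c • ellipsoidCutoff T (R⁻¹ • y)) (h_smooth.const_smul c)
      (h_supp.smul_left (f := fun _ => c)) (h_compl ▸ hφ0)
      (by rw [h_compl]; filter_upwards [h_one] with x hx; simp [hx])]
    congr 1 with x
    rw [← map_smul]
    congr 1
    rw [gradient, gradient, fderiv_fun_const_smul (h_smooth.differentiable one_ne_zero x)]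
    simp
  have h_lim := (tendsto_integral_apply_gradient_ellipsoidCutoff (μ := volume) hT
    (by simpa using hJT)).const_smul c
  rw [smul_zero] at h_lim
  exact tendsto_nhds_unique (tendsto_const_nhds.congr' h_eq) h_lim

end FluxAtInfinity

section Polar

variable {E F : Type*} [NormedAddCommGroup E] [NormedSpace ℝ E] [FiniteDimensional ℝ E]
  [MeasurableSpace E] [BorelSpace E] [NormedAddCommGroup F] [NormedSpace ℝ F]

lemma integral_volumeIoiPow (n : ℕ) (g : ℝ → F) :
    ∫ r : Set.Ioi (0 : ℝ), g r ∂(Measure.volumeIoiPow n) = ∫ r in Set.Ioi (0 : ℝ), r ^ n • g r := by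
  simp only [Measure.volumeIoiPow, ENNReal.ofReal]
  rw [integral_withDensity_eq_integral_smul (measurable_subtype_coe.pow_const _).real_toNNReal,
    ← integral_subtype_comap measurableSet_Ioi]
  congr 1 with r
  rw [NNReal.smul_def, Real.coe_toNNReal _ (pow_nonneg r.2.out.le _)]

lemma integral_eq_integral_Ioi_integral_toSphere [Nontrivial E] {μ : Measure E}
    [μ.IsAddHaarMeasure] {f : E → F} (hf : Integrable f μ) :
    ∫ x, f x ∂μ = ∫ r in Set.Ioi (0 : ℝ), r ^ (Module.finrank ℝ E - 1) •
      ∫ s : Metric.sphere (0 : E) 1, f (r • (s : E)) ∂μ.toSphere := by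
  set n := Module.finrank ℝ E
  have h_polar := μ.measurePreserving_homeomorphUnitSphereProd
  have h_emb := (homeomorphUnitSphereProd E).measurableEmbedding
  have h_comp : (fun p : Metric.sphere (0 : E) 1 × Set.Ioi (0 : ℝ) =>
      f ((p.2 : ℝ) • (p.1 : E))) ∘ homeomorphUnitSphereProd E = fun x => f x.1 := by
    ext ⟨x, hx⟩
    simp [smul_inv_smul₀ (norm_ne_zero_iff.2 hx)]
  have h_int : Integrable (fun p : Metric.sphere (0 : E) 1 × Set.Ioi (0 : ℝ) =>
      f ((p.2 : ℝ) • (p.1 : E))) (μ.toSphere.prod (Measure.volumeIoiPow (n - 1))) := by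
    rw [← h_polar.integrable_comp_emb h_emb, h_comp]
    exact (integrableOn_iff_comap_subtypeVal (measurableSet_singleton _).compl).1
      hf.integrableOn
  calc ∫ x, f x ∂μ = ∫ x : ({0}ᶜ : Set E), f x.1 ∂(μ.comap (↑)) := by
        rw [integral_subtype_comap (measurableSet_singleton _).compl f, restrict_compl_singleton]
    _ = ∫ p : Metric.sphere (0 : E) 1 × Set.Ioi (0 : ℝ), f ((p.2 : ℝ) • (p.1 : E))
          ∂(μ.toSphere.prod (Measure.volumeIoiPow (n - 1))) := by
        rw [← h_polar.integral_comp h_emb]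
        exact congrArg (integral _) h_comp.symm
    _ = ∫ r : Set.Ioi (0 : ℝ), (∫ s : Metric.sphere (0 : E) 1, f ((r : ℝ) • (s : E)) ∂μ.toSphere)
          ∂(Measure.volumeIoiPow (n - 1)) := integral_prod_symm _ h_int
    _ = _ := integral_volumeIoiPow (n - 1) fun r =>
          ∫ s : Metric.sphere (0 : E) 1, f (r • (s : E)) ∂μ.toSphere

end Polar

section RadialPotential

open scoped Gradient

lemma exists_subset_Ioo_of_isCompact_of_subset_Ioi {K : Set ℝ} (hK : IsCompact K) {r : ℝ}
    (hKr : K ⊆ Set.Ioi r) : ∃ a b, r < a ∧ K ⊆ Set.Ioo a b := by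
  obtain ⟨b, hb⟩ := hK.bddAbove
  obtain ⟨a, ha⟩ := (hK.insert (r + 1)).exists_isLeast (Set.insert_nonempty _ _)
  have hra : r < a := by
    rcases ha.1 with rfl | haK
    · exact lt_add_one r
    · exact hKr haK
  obtain ⟨a', hra', ha'a⟩ := exists_between hra
  exact ⟨a', b + 1, hra', fun t ht => ⟨ha'a.trans_le (ha.2 (Set.mem_insert_of_mem _ ht)),
    (hb ht).trans_lt (lt_add_one b)⟩⟩

lemma exists_hasDerivAt_of_tsupport_subset_Ioo {F : Type*} [NormedAddCommGroup F]
    [NormedSpace ℝ F] [CompleteSpace F] {χ : ℝ → F} (hχ : Continuous χ) {a b : ℝ}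
    (hχab : tsupport χ ⊆ Set.Ioo a b) :
    ∃ (α : ℝ → F) (c : F), (∀ t, HasDerivAt α (χ t) t) ∧ (∀ t ≤ a, α t = c) ∧
      ∀ t, b ≤ t → α t = 0 := by
  have h_zero {t : ℝ} (ht : t ∉ Set.Ioo a b) : χ t = 0 :=
    image_eq_zero_of_notMem_tsupport fun h => ht (hχab h)
  have h_int (s t : ℝ) : IntervalIntegrable χ volume s t := hχ.intervalIntegrable s t
  refine ⟨fun t => ∫ s in b..t, χ s, ∫ s in b..a, χ s, fun t => ?_, fun t ht => ?_, fun t ht => ?_⟩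
  · exact intervalIntegral.integral_hasDerivAt_right (h_int b t)
      (hχ.stronglyMeasurableAtFilter _ _) hχ.continuousAt
  · beta_reduce
    rw [← intervalIntegral.integral_add_adjacent_intervals (h_int b a) (h_int a t),
      add_eq_left]
    refine (intervalIntegral.integral_congr fun s hs => h_zero ?_).trans
      intervalIntegral.integral_zero
    rw [Set.uIcc_of_ge ht] at hs
    exact fun h => h.1.not_ge hs.2
  · refine (intervalIntegral.integral_congr fun s hs => h_zero ?_).trans
      intervalIntegral.integral_zero
    rw [Set.uIcc_of_le ht] at hs
    exact fun h => h.2.not_ge hs.1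

variable {E : Type*} [NormedAddCommGroup E] [InnerProductSpace ℝ E]

lemma hasGradientAt_norm [CompleteSpace E] {x : E} (hx : x ≠ 0) :
    HasGradientAt (fun y : E => ‖y‖) (‖x‖⁻¹ • x) x := by
  have h_sqrt := (hasStrictFDerivAt_norm_sq x).hasFDerivAt.sqrt (by simpa using hx)
  simp only [Real.sqrt_sq (norm_nonneg _)] at h_sqrt
  refine hasGradientAt_iff_hasFDerivAt.2 (h_sqrt.congr_fderiv ?_)
  ext y
  simp only [one_div, _root_.mul_inv_rev, _root_.smul_apply, coe_innerSL_apply, nsmul_eq_mul,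
    Nat.cast_ofNat, smul_eq_mul, map_smul, InnerProductSpace.toDual_apply_apply]
  ring

lemma exists_radial_potential [FiniteDimensional ℝ E] {r₀ : ℝ} (hr₀ : 0 ≤ r₀) {χ : ℝ → ℝ}
    (hχ : Continuous χ) (hχc : HasCompactSupport χ) (hχr₀ : tsupport χ ⊆ Set.Ioi r₀) :
    ∃ (φ : E → ℝ) (c : ℝ), ContDiff ℝ 1 φ ∧ HasCompactSupport φ ∧
      (φ =ᶠ[𝓝ˢ (Metric.closedBall 0 r₀)] fun _ => c) ∧ ∀ x, ∇ φ x = (χ ‖x‖ / ‖x‖) • x := by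
  obtain ⟨a, b, hr₀a, hχab⟩ := exists_subset_Ioo_of_isCompact_of_subset_Ioi hχc hχr₀
  obtain ⟨α, c, hα, hαa, hαb⟩ := exists_hasDerivAt_of_tsupport_subset_Ioo hχ hχab
  have h_const : (fun x : E => α ‖x‖) =ᶠ[𝓝ˢ (Metric.closedBall 0 r₀)] fun _ => c := by
    filter_upwards [Metric.isOpen_ball.mem_nhdsSet.2 (Metric.closedBall_subset_ball hr₀a)]
      with x hx
    exact hαa _ (mem_ball_zero_iff.1 hx).le
  have h_const_zero : (fun x : E => α ‖x‖) =ᶠ[𝓝 0] fun _ => c :=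
    h_const.filter_mono (nhds_le_nhdsSet (by simpa using hr₀))
  have hα_smooth : ContDiff ℝ 1 α := contDiff_one_iff_deriv.2
    ⟨fun t => (hα t).differentiableAt, by simpa only [funext fun t => (hα t).deriv] using hχ⟩
  refine ⟨fun x => α ‖x‖, c, contDiff_iff_contDiffAt.2 fun x => ?_, ?_, h_const, fun x => ?_⟩
  · rcases eq_or_ne x 0 with rfl | hx
    · exact contDiffAt_const.congr_of_eventuallyEq h_const_zero
    · exact hα_smooth.contDiffAt.comp x (contDiffAt_norm ℝ hx)
  · refine .of_support_subset_isCompact (isCompact_closedBall 0 b) fun x hx => ?_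
    rw [mem_closedBall_zero_iff]
    by_contra! h
    exact hx (hαb _ h.le)
  · rcases eq_or_ne x 0 with rfl | hx
    · simp [gradient, h_const_zero.fderiv_eq]
    · rw [div_eq_mul_inv, ← smul_smul]
      exact HasGradientAt.gradient (((hα ‖x‖).comp_hasFDerivAt x
        (hasGradientAt_norm hx).hasFDerivAt).congr_fderiv (map_smul _ _ _).symm)

end RadialPotential

section SphereFlux

open scoped Gradient

variable {E F : Type*} [NormedAddCommGroup E] [InnerProductSpace ℝ E] [FiniteDimensional ℝ E]
  [MeasurableSpace E] [BorelSpace E] [NormedAddCommGroup F] [NormedSpace ℝ F]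

/-- The flux of a covector field `J` through the sphere of radius `R` centred at the origin. It is
normalized as an integral over the unit sphere, without the area factor `R ^ (n - 1)`. -/
def sphereFlux (μ : Measure E) (J : E → E →L[ℝ] F) (R : ℝ) : F :=
  ∫ s : Metric.sphere (0 : E) 1, J (R • (s : E)) s ∂μ.toSphere

variable {μ : Measure E} [μ.IsAddHaarMeasure] {r₀ : ℝ} {J : E → E →L[ℝ] F}

lemma continuousOn_sphereFlux (hr₀ : 0 ≤ r₀) (hJ : ContinuousOn J {x | r₀ < ‖x‖}) :
    ContinuousOn (sphereFlux μ J) (Set.Ioi r₀) := by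
  refine continuousOn_integral_of_compact_support isCompact_univ (ContinuousOn.clm_apply
    (hJ.comp (by fun_prop) ?_) (by fun_prop)) fun _ s _ hs => absurd (Set.mem_univ s) hs
  rintro ⟨R, s⟩ ⟨hR, -⟩
  simpa [norm_smul, abs_of_pos (hr₀.trans_lt hR)] using hR

variable [Nontrivial E]

lemma integral_apply_smul_eq_integral_Ioi_sphereFlux {χ : ℝ → ℝ}
    (hint : Integrable (fun x => J x ((χ ‖x‖ / ‖x‖) • x)) μ) :
    ∫ x, J x ((χ ‖x‖ / ‖x‖) • x) ∂μ =
      ∫ r in Set.Ioi (0 : ℝ), χ r • r ^ (Module.finrank ℝ E - 1) • sphereFlux μ J r := by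
  rw [integral_eq_integral_Ioi_integral_toSphere hint]
  refine setIntegral_congr_fun measurableSet_Ioi fun r (hr : 0 < r) => ?_
  simp only [norm_smul, norm_eq_of_mem_sphere, Real.norm_of_nonneg hr.le, mul_one, map_smul,
    smul_smul, div_mul_cancel₀ _ hr.ne', sphereFlux, integral_smul]
  rw [mul_comm]

lemma sphereFlux_eq_zero_of_integral_apply_gradient_eq_zero [CompleteSpace F] (hr₀ : 0 ≤ r₀)
    (hJ : ContinuousOn J {x | r₀ < ‖x‖})
    (hJφ : ∀ (φ : E → ℝ) (c : ℝ), ContDiff ℝ 1 φ → HasCompactSupport φ →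
      (φ =ᶠ[𝓝ˢ (Metric.closedBall 0 r₀)] fun _ => c) → ∫ x, J x (∇ φ x) ∂μ = 0)
    {R : ℝ} (hR : r₀ < R) : sphereFlux μ J R = 0 := by
  set n := Module.finrank ℝ E
  have h_cont : ContinuousOn (fun r => r ^ (n - 1) • sphereFlux μ J r) (Set.Ioi r₀) :=
    (continuousOn_pow _).smul (continuousOn_sphereFlux hr₀ hJ)
  have h_ae : ∀ᵐ r ∂(volume : Measure ℝ), r ∈ Set.Ioi r₀ → r ^ (n - 1) • sphereFlux μ J r = 0 := by
    refine isOpen_Ioi.ae_eq_zero_of_integral_contDiff_smul_eq_zero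
      (h_cont.locallyIntegrableOn measurableSet_Ioi) fun χ hχ hχc hχr₀ => ?_
    obtain ⟨φ, c, hφ, hφc, hφ0, hφχ⟩ :=
      exists_radial_potential (E := E) hr₀ hχ.continuous hχc hχr₀
    have hint := integrable_apply_gradient (μ := μ) (isOpen_setOf_lt_norm r₀) hJ hφ hφc
      (compl_setOf_lt_norm (E := E) r₀ ▸ hφ0)
    have h_zero := hJφ φ c hφ hφc hφ0
    simp only [hφχ] at hint h_zero
    rw [integral_apply_smul_eq_integral_Ioi_sphereFlux hint] at h_zero
    rw [← h_zero, setIntegral_eq_integral_of_forall_compl_eq_zero fun r hr => ?_]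
    rw [image_eq_zero_of_notMem_tsupport fun h => hr (hr₀.trans_lt (hχr₀ h)), zero_smul]
  have h_zero := Measure.eqOn_open_of_ae_eq ((ae_restrict_iff' measurableSet_Ioi).2 h_ae)
    isOpen_Ioi h_cont continuousOn_const hR
  exact (smul_eq_zero_iff_right (pow_ne_zero _ (hr₀.trans_lt hR).ne')).1 h_zero

end SphereFlux

section Concomitant

variable {ι : Type*} [Fintype ι] [DecidableEq ι] {F : Type*} [NormedAddCommGroup F]
  [NormedSpace ℝ F] {𝕜 : Type*} [NormedField 𝕜] [NormedAlgebra ℝ 𝕜]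

/-- The conormal derivative of `w` with respect to the coefficient matrix `A`, as a covector: its
value at `n` is the derivative of `w` at `x` in the direction `A n`, which for symmetric `A` is
`n · A · ∇w`. -/
def conormalDeriv (A : Matrix ι ι ℝ) (w : EuclideanSpace ℝ ι → F) (x : EuclideanSpace ℝ ι) :
    EuclideanSpace ℝ ι →L[ℝ] F :=
  fderiv ℝ w x ∘L toEuclideanCLM (𝕜 := ℝ) A

/-- The bilinear concomitant `(n · A · ∇u) v - (n · A · ∇v) u` of `u` and `v`, as a covector in
`n`. -/
def concomitant (A : Matrix ι ι ℝ) (u v : EuclideanSpace ℝ ι → 𝕜) :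
    EuclideanSpace ℝ ι → EuclideanSpace ℝ ι →L[ℝ] 𝕜 :=
  v • conormalDeriv A u - u • conormalDeriv A v

lemma concomitant_apply (A : Matrix ι ι ℝ) (u v : EuclideanSpace ℝ ι → 𝕜)
    (x n : EuclideanSpace ℝ ι) :
    concomitant A u v x n = fderiv ℝ u x (toEuclideanCLM (𝕜 := ℝ) A n) * v x -
      fderiv ℝ v x (toEuclideanCLM (𝕜 := ℝ) A n) * u x := by
  simp [concomitant, conormalDeriv, mul_comm]

lemma toEuclideanCLM_single (A : Matrix ι ι ℝ) (i : ι) :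
    toEuclideanCLM (𝕜 := ℝ) A (EuclideanSpace.single i 1) =
      ∑ j, A j i • EuclideanSpace.single j (1 : ℝ) := by
  ext k
  simp [Finset.sum_apply, Pi.single_apply]

lemma contDiffOn_conormalDeriv (A : Matrix ι ι ℝ) {w : EuclideanSpace ℝ ι → F}
    {U : Set (EuclideanSpace ℝ ι)} (hU : IsOpen U) (hw : ContDiffOn ℝ 2 w U) :
    ContDiffOn ℝ 1 (conormalDeriv A w) U :=
  (hw.fderiv_of_isOpen hU (by norm_num)).clm_comp contDiffOn_const

lemma contDiffOn_concomitant (A : Matrix ι ι ℝ) {u v : EuclideanSpace ℝ ι → 𝕜}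
    {U : Set (EuclideanSpace ℝ ι)} (hU : IsOpen U) (hu : ContDiffOn ℝ 2 u U)
    (hv : ContDiffOn ℝ 2 v U) : ContDiffOn ℝ 1 (concomitant A u v) U :=
  ((hv.of_le one_le_two).smul (contDiffOn_conormalDeriv A hU hu)).sub
    ((hu.of_le one_le_two).smul (contDiffOn_conormalDeriv A hU hv))

lemma divergence_conormalDeriv {A : Matrix ι ι ℝ} (hA : A.IsSymm) {w : EuclideanSpace ℝ ι → F}
    {x : EuclideanSpace ℝ ι} (hw : DifferentiableAt ℝ (fderiv ℝ w) x) :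
    divergence (conormalDeriv A w) x = ∑ i, ∑ j, A i j •
      fderiv ℝ (fun y => fderiv ℝ w y (EuclideanSpace.single j 1)) x
        (EuclideanSpace.single i 1) := by
  have h_fderiv (h : EuclideanSpace ℝ ι) :
      fderiv ℝ (conormalDeriv A w) x h =
        fderiv ℝ (fderiv ℝ w) x h ∘L toEuclideanCLM (𝕜 := ℝ) A := by
    unfold conormalDeriv
    simp [fderiv_clm_comp hw (differentiableAt_const _)]
  simp only [divergence, h_fderiv, ContinuousLinearMap.comp_apply, toEuclideanCLM_single, map_sum,
    map_smul, hA.apply, fderiv_clm_apply hw (differentiableAt_const _)]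
  simp

lemma sum_mul_apply_toEuclideanCLM_comm {A : Matrix ι ι ℝ} (hA : A.IsSymm)
    (L M : EuclideanSpace ℝ ι →L[ℝ] 𝕜) :
    ∑ i, L (EuclideanSpace.single i 1) *
        M (toEuclideanCLM (𝕜 := ℝ) A (EuclideanSpace.single i 1)) =
      ∑ i, M (EuclideanSpace.single i 1) *
        L (toEuclideanCLM (𝕜 := ℝ) A (EuclideanSpace.single i 1)) := by
  simp only [toEuclideanCLM_single, map_sum, map_smul, Finset.mul_sum]
  rw [Finset.sum_comm]
  refine Finset.sum_congr rfl fun j _ => Finset.sum_congr rfl fun i _ => ?_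
  rw [hA.apply, mul_smul_comm, mul_smul_comm, mul_comm]

lemma divergence_concomitant {A : Matrix ι ι ℝ} (hA : A.IsSymm) {u v : EuclideanSpace ℝ ι → 𝕜}
    {x : EuclideanSpace ℝ ι} (hu : ContDiffAt ℝ 2 u x) (hv : ContDiffAt ℝ 2 v x) :
    divergence (concomitant A u v) x =
      v x * divergence (conormalDeriv A u) x - u x * divergence (conormalDeriv A v) x := by
  have h_diff {w : EuclideanSpace ℝ ι → 𝕜} (hw : ContDiffAt ℝ 2 w x) :
      DifferentiableAt ℝ w x ∧ DifferentiableAt ℝ (conormalDeriv A w) x :=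
    ⟨hw.differentiableAt two_ne_zero, ((hw.fderiv_right (m := 1) (by norm_num)).differentiableAt
      one_ne_zero).clm_comp (differentiableAt_const _)⟩
  obtain ⟨hu', hAu⟩ := h_diff hu
  obtain ⟨hv', hAv⟩ := h_diff hv
  have h_symm := sum_mul_apply_toEuclideanCLM_comm hA (fderiv ℝ v x) (fderiv ℝ u x)
  rw [concomitant, divergence_sub (hv'.smul hAu) (hu'.smul hAv), divergence_smul hv' hAu,
    divergence_smul hu' hAv]
  simp only [smul_eq_mul, conormalDeriv, ContinuousLinearMap.comp_apply] at h_symm ⊢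
  rw [h_symm]
  ring

end Concomitant

section Radiation

variable {ι : Type*} [Fintype ι] [DecidableEq ι]

lemma adjoint_toEuclideanCLM {A : Matrix ι ι ℝ} (hA : A.IsHermitian) :
    (toEuclideanCLM (𝕜 := ℝ) A).adjoint = toEuclideanCLM (𝕜 := ℝ) A := by
  rw [← ContinuousLinearMap.star_eq_adjoint, ← map_star, star_eq_conjTranspose, hA.eq]

lemma toEuclideanCLM_toEuclideanCLM_inv {A : Matrix ι ι ℝ} (hA : IsUnit A)
    (x : EuclideanSpace ℝ ι) :
    toEuclideanCLM (𝕜 := ℝ) A (toEuclideanCLM (𝕜 := ℝ) A⁻¹ x) = x := by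
  rw [← mul_apply_eq_comp, ← map_mul,
    A.mul_nonsing_inv ((A.isUnit_iff_isUnit_det).1 hA), map_one, one_apply_eq_self]

lemma inner_toEuclideanCLM_pos {A : Matrix ι ι ℝ} (hA : A.PosDef) {x : EuclideanSpace ℝ ι}
    (hx : x ≠ 0) : 0 < ⟪x, toEuclideanCLM (𝕜 := ℝ) A x⟫_ℝ := by
  have h_pos := hA.dotProduct_mulVec_pos (x := x.ofLp) (by simpa using hx)
  simpa [EuclideanSpace.inner_eq_star_dotProduct, dotProduct_comm] using h_pos

lemma exists_le_sqrt_inner_toEuclideanCLM [Nonempty ι] {A : Matrix ι ι ℝ} (hA : A.PosDef) :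
    ∃ c > 0, ∀ x : EuclideanSpace ℝ ι, ‖x‖ = 1 → c ≤ √⟪x, toEuclideanCLM (𝕜 := ℝ) A x⟫_ℝ := by
  have h_cont : Continuous fun x : EuclideanSpace ℝ ι =>
      √⟪x, toEuclideanCLM (𝕜 := ℝ) A x⟫_ℝ := by fun_prop
  obtain ⟨y, hy, h_min⟩ := (isCompact_sphere (0 : EuclideanSpace ℝ ι) 1).exists_isMinOn
    (NormedSpace.sphere_nonempty.2 zero_le_one) h_cont.continuousOn
  exact ⟨_, Real.sqrt_pos.2 (inner_toEuclideanCLM_pos hA (ne_zero_of_mem_unit_sphere ⟨y, hy⟩)),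
    fun x hx => h_min (by simpa using hx)⟩

variable {A : Matrix (Fin 3) (Fin 3) ℝ} {κ : ℝ} {u v : EuclideanSpace ℝ (Fin 3) → ℂ}

lemma matVec_eq_toEuclideanCLM (A : Matrix (Fin 3) (Fin 3) ℝ) (x : EuclideanSpace ℝ (Fin 3)) :
    matVec A x = toEuclideanCLM (𝕜 := ℝ) A x :=
  rfl

lemma divergence_concomitant_eq_zero (hA : A.IsSymm) {x : EuclideanSpace ℝ (Fin 3)}
    (hu : ContDiffAt ℝ 2 u x) (hv : ContDiffAt ℝ 2 v x) (hueq : SatisfiesHelmholtzAt A κ u x)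
    (hveq : SatisfiesHelmholtzAt A κ v x) : divergence (concomitant A u v) x = 0 := by
  have h_div {w : EuclideanSpace ℝ (Fin 3) → ℂ} (hw : ContDiffAt ℝ 2 w x)
      (hweq : SatisfiesHelmholtzAt A κ w x) :
      divergence (conormalDeriv A w) x = -((κ : ℂ) ^ 2 * w x) := by
    rw [divergence_conormalDeriv hA
      ((hw.fderiv_right (m := 1) (by norm_num)).differentiableAt one_ne_zero)]
    simpa only [Complex.real_smul] using eq_neg_of_add_eq_zero_left hweq
  rw [divergence_concomitant hA hu hv, h_div hu hueq, h_div hv hveq]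
  ring

lemma sqrt_mul_concomitant_apply_matVec_inv (hA : IsUnit A) {x : EuclideanSpace ℝ (Fin 3)}
    (hx : x ≠ 0) :
    (√⟪‖x‖⁻¹ • x, matVec A⁻¹ (‖x‖⁻¹ • x)⟫_ℝ : ℂ) *
        concomitant A u v x (matVec A⁻¹ (matVec A⁻¹ x)) =
      ‖x‖ * (radiationDefect A κ u x * v x - radiationDefect A κ v x * u x) := by
  have h_scale : matVec A⁻¹ x = ‖x‖ • matVec A⁻¹ (‖x‖⁻¹ • x) := by
    rw [matVec_eq_toEuclideanCLM, matVec_eq_toEuclideanCLM, map_smul,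
      smul_inv_smul₀ (norm_ne_zero_iff.2 hx)]
  rw [concomitant_apply, matVec_eq_toEuclideanCLM _ (matVec A⁻¹ x),
    toEuclideanCLM_toEuclideanCLM_inv hA, h_scale, radiationDefect, radiationDefect]
  simp only [map_smul, Complex.real_smul]
  ring

lemma isLittleO_concomitant_apply_matVec_inv (hA : A.PosDef)
    (hurad : radiationDefect A κ u =o[Bornology.cobounded _] fun x => ‖x‖⁻¹)
    (hvrad : radiationDefect A κ v =o[Bornology.cobounded _] fun x => ‖x‖⁻¹)
    (hu : u =O[Bornology.cobounded _] fun x => ‖x‖⁻¹)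
    (hv : v =O[Bornology.cobounded _] fun x => ‖x‖⁻¹) :
    (fun x => concomitant A u v x (matVec A⁻¹ (matVec A⁻¹ x))) =o[Bornology.cobounded _]
      fun x => ‖x‖⁻¹ := by
  obtain ⟨c, hc, h_le⟩ := exists_le_sqrt_inner_toEuclideanCLM hA.inv
  have h_bound : (fun x => concomitant A u v x (matVec A⁻¹ (matVec A⁻¹ x)))
      =O[Bornology.cobounded _] fun x =>
        (‖x‖ : ℂ) * (radiationDefect A κ u x * v x - radiationDefect A κ v x * u x) := by
    refine .of_bound c⁻¹ ?_
    filter_upwards [Bornology.eventually_ne_cobounded 0] with x hx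
    rw [← sqrt_mul_concomitant_apply_matVec_inv hA.isUnit hx, norm_mul, Complex.norm_real,
      Real.norm_of_nonneg (Real.sqrt_nonneg _), ← div_eq_inv_mul, le_div_iff₀' hc]
    gcongr
    exact h_le _ (by simp [norm_smul, hx])
  have h_defect := (hurad.mul_isBigO hv).sub (hvrad.mul_isBigO hu)
  have h_norm : (fun x : EuclideanSpace ℝ (Fin 3) => (‖x‖ : ℂ))
      =O[Bornology.cobounded _] fun x => ‖x‖ :=
    Asymptotics.isBigO_of_le _ (by simp)
  refine (h_bound.trans_isLittleO (h_norm.mul_isLittleO h_defect)).congr_right fun x => ?_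
  rcases eq_or_ne ‖x‖ 0 with hx | hx
  · simp [hx]
  · exact mul_inv_cancel_left₀ hx _

end Radiation

section Decay

variable {E F : Type*} [SeminormedAddCommGroup E] [SeminormedAddCommGroup F] {f : E → F}
  {r₀ C : ℝ}

lemma isBigO_cobounded_of_norm_le_div (hf : ∀ x, r₀ < ‖x‖ → ‖f x‖ ≤ C / ‖x‖) :
    f =O[Bornology.cobounded E] fun x => ‖x‖⁻¹ := by
  refine .of_bound C ?_
  filter_upwards [tendsto_norm_cobounded_atTop.eventually_gt_atTop r₀] with x hx
  simpa [div_eq_mul_inv] using hf x hx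

lemma isLittleO_cobounded_of_norm_le_div_sq (hf : ∀ x, r₀ < ‖x‖ → ‖f x‖ ≤ C / ‖x‖ ^ 2) :
    f =o[Bornology.cobounded E] fun x => ‖x‖⁻¹ := by
  have h_bigO : f =O[Bornology.cobounded E] fun x => (‖x‖ ^ 2)⁻¹ := by
    refine .of_bound C ?_
    filter_upwards [tendsto_norm_cobounded_atTop.eventually_gt_atTop r₀] with x hx
    simpa [div_eq_mul_inv] using hf x hx
  have h_inv : (fun x : E => ‖x‖⁻¹) =o[Bornology.cobounded E] fun _ => (1 : ℝ) :=
    (Asymptotics.isLittleO_one_iff ℝ).2 tendsto_norm_cobounded_atTop.inv_tendsto_atTop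
  refine h_bigO.trans_isLittleO ((h_inv.mul_isBigO (Asymptotics.isBigO_refl _ _)).congr
    (fun x => ?_) fun x => one_mul _)
  rw [← mul_inv, sq]

end Decay

theorem boundary_concomitant_tendsto_zero_general
    {A : Matrix (Fin 3) (Fin 3) ℝ} (hA : A.PosDef) {κ r₀ : ℝ} (hr₀ : 0 ≤ r₀)
    {u v : EuclideanSpace ℝ (Fin 3) → ℂ}
    (hu : ContDiffOn ℝ 2 u {x | r₀ < ‖x‖}) (hv : ContDiffOn ℝ 2 v {x | r₀ < ‖x‖})
    (hueq : ∀ x, r₀ < ‖x‖ → SatisfiesHelmholtzAt A κ u x)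
    (hveq : ∀ x, r₀ < ‖x‖ → SatisfiesHelmholtzAt A κ v x)
    (hurad : radiationDefect A κ u =o[Bornology.cobounded _] fun x => ‖x‖⁻¹)
    (hvrad : radiationDefect A κ v =o[Bornology.cobounded _] fun x => ‖x‖⁻¹)
    (hudecay : u =O[Bornology.cobounded _] fun x => ‖x‖⁻¹)
    (hvdecay : v =O[Bornology.cobounded _] fun x => ‖x‖⁻¹) {R : ℝ} (hR : r₀ < R) :
    ∫ s : Metric.sphere (0 : EuclideanSpace ℝ (Fin 3)) 1,
      (R ^ 2 : ℂ) *
        (fderiv ℝ u (R • (s : EuclideanSpace ℝ (Fin 3)))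
            (matVec A (s : EuclideanSpace ℝ (Fin 3))) * v (R • (s : EuclideanSpace ℝ (Fin 3)))
          - fderiv ℝ v (R • (s : EuclideanSpace ℝ (Fin 3)))
              (matVec A (s : EuclideanSpace ℝ (Fin 3))) *
              u (R • (s : EuclideanSpace ℝ (Fin 3))))
      ∂((volume : Measure (EuclideanSpace ℝ (Fin 3))).toSphere) = 0 := by
  have h_open := isOpen_setOf_lt_norm (E := EuclideanSpace ℝ (Fin 3)) r₀
  have hAs : A.IsSymm := by
    simpa [IsSymm, IsHermitian, conjTranspose_eq_transpose_of_trivial] using hA.isHermitian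
  have hJ := contDiffOn_concomitant A h_open hu hv
  have hdiv (x : EuclideanSpace ℝ (Fin 3)) (hx : r₀ < ‖x‖) : divergence (concomitant A u v) x = 0 :=
    divergence_concomitant_eq_zero hAs (hu.contDiffAt (h_open.mem_nhds hx))
      (hv.contDiffAt (h_open.mem_nhds hx)) (hueq x hx) (hveq x hx)
  have hT : Function.Injective (toEuclideanCLM (𝕜 := ℝ) A⁻¹) :=
    Function.LeftInverse.injective (toEuclideanCLM_toEuclideanCLM_inv hA.isUnit)
  have hJT : (fun x => concomitant A u v x
      (((toEuclideanCLM (𝕜 := ℝ) A⁻¹).adjoint ∘L toEuclideanCLM (𝕜 := ℝ) A⁻¹) x))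
      =o[Bornology.cobounded _] fun x => ‖x‖ ^ 2 / ‖x‖ ^ Fintype.card (Fin 3) := by
    rw [adjoint_toEuclideanCLM hA.inv.isHermitian]
    refine (isLittleO_concomitant_apply_matVec_inv hA hurad hvrad hudecay hvdecay).congr_right
      fun x => ?_
    rw [Fintype.card_fin]
    rcases eq_or_ne ‖x‖ 0 with hx | hx
    · simp [hx]
    · field_simp
  have h_flux : sphereFlux volume (concomitant A u v) R = 0 :=
    sphereFlux_eq_zero_of_integral_apply_gradient_eq_zero hr₀ hJ.continuousOn
      (fun φ c hφ hφc hφ0 =>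
        integral_apply_gradient_eq_zero_of_isLittleO hJ hdiv hT hJT hφ hφc hφ0) hR
  simp only [sphereFlux, concomitant_apply] at h_flux
  simp only [matVec_eq_toEuclideanCLM]
  rw [integral_const_mul, h_flux, mul_zero]

/-- Vanishing of the boundary bilinear concomitant: if `u, v` are `C²` outside a ball of
radius `r₀` (containing the point sources and the inhomogeneity), satisfy the constant
coefficient anisotropic Helmholtz equation there, the anisotropic radiation condition with
`O(|r|⁻²)` defect, and are `O(|r|⁻¹)`, then
`∫_{∂Ω_R} [(n·A·∇u)·v − (n·A·∇v)·u] dS → 0` as `R → ∞`. -/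
theorem boundary_concomitant_tendsto_zero
    (A : Matrix (Fin 3) (Fin 3) ℝ) (hA : A.PosDef) (hAs : A.IsSymm)
    (κ : ℝ) (hκ : 0 < κ) (r₀ : ℝ) (hr₀ : 0 < r₀)
    (u v : EuclideanSpace ℝ (Fin 3) → ℂ)
    (hu : ContDiffOn ℝ 2 u {x | r₀ < ‖x‖}) (hv : ContDiffOn ℝ 2 v {x | r₀ < ‖x‖})
    (hueq : ∀ x, r₀ < ‖x‖ → SatisfiesHelmholtzAt A κ u x)
    (hveq : ∀ x, r₀ < ‖x‖ → SatisfiesHelmholtzAt A κ v x)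
    (hrad : ∃ C : ℝ, ∀ x, r₀ < ‖x‖ →
      ‖radiationDefect A κ u x‖ ≤ C / ‖x‖ ^ 2 ∧ ‖radiationDefect A κ v x‖ ≤ C / ‖x‖ ^ 2)
    (hdecay : ∃ C : ℝ, ∀ x, r₀ < ‖x‖ → ‖u x‖ ≤ C / ‖x‖ ∧ ‖v x‖ ≤ C / ‖x‖) :
    Tendsto
      (fun R : ℝ =>
        ∫ s : Metric.sphere (0 : EuclideanSpace ℝ (Fin 3)) 1,
          (R ^ 2 : ℂ) *
            (fderiv ℝ u (R • (s : EuclideanSpace ℝ (Fin 3)))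
                (matVec A (s : EuclideanSpace ℝ (Fin 3))) *
                v (R • (s : EuclideanSpace ℝ (Fin 3)))
              - fderiv ℝ v (R • (s : EuclideanSpace ℝ (Fin 3)))
                  (matVec A (s : EuclideanSpace ℝ (Fin 3))) *
                  u (R • (s : EuclideanSpace ℝ (Fin 3))))
          ∂((volume : Measure (EuclideanSpace ℝ (Fin 3))).toSphere))
      atTop (𝓝 0) := by
  obtain ⟨C, hC⟩ := hrad
  obtain ⟨D, hD⟩ := hdecay
  refine tendsto_const_nhds.congr' ((eventually_gt_atTop r₀).mono fun R hR => ?_)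
  exact (boundary_concomitant_tendsto_zero_general hA hr₀.le hu hv hueq hveq
    (isLittleO_cobounded_of_norm_le_div_sq fun x hx => (hC x hx).1)
    (isLittleO_cobounded_of_norm_le_div_sq fun x hx => (hC x hx).2)
    (isBigO_cobounded_of_norm_le_div fun x hx => (hD x hx).1)
    (isBigO_cobounded_of_norm_le_div fun x hx => (hD x hx).2) hR).symm

end
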